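/- There exists a constant c > 0 (depending only on ξ and the sequence (x_k)) such that every nonzero polynomial R ∈ ℤ[T] of degree at most 3 satisfies |R(ξ)| ≥ c·‖R‖^(−γ³). Moreover, if R is not divisible within ℚ[T] by any of the polynomials Q_k (k ≥ 1), then the stronger estimate |R(ξ)| ≥ c·‖R‖^(−1−γ²) holds. -/

import Mathlib

open Polynomial Filter

noncomputable def gold : ℝ := (1 + Real.sqrt 5) / 2

def Mmat (k : ℕ) : Matrix (Fin 2) (Fin 2) ℤ := !![3, (-1)^k; (-1)^(k+1), 0]

noncomputable def Xnorm (x : ℕ → Matrix (Fin 2) (Fin 2) ℤ) (k : ℕ) : ℝ :=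
  max |(x k 0 0 : ℝ)| (max |(x k 0 1 : ℝ)| |(x k 1 1 : ℝ)|)

def MarkoffSeq (ξ : ℝ) (x : ℕ → Matrix (Fin 2) (Fin 2) ℤ) : Prop :=
  (∀ k, 1 ≤ k → x k 0 1 = x k 1 0) ∧
  (∀ k, 1 ≤ k → (x k).det = 1) ∧
  ∃ c₁ c₂ c₃ : ℝ, 0 < c₁ ∧ 0 < c₂ ∧ 0 < c₃ ∧ ∀ k, 1 ≤ k →
    (c₁ * Xnorm x k ^ gold ≤ Xnorm x (k+1) ∧ Xnorm x (k+1) ≤ c₂ * Xnorm x k ^ gold) ∧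
    (|(x k 0 0 : ℝ) * ξ - (x k 0 1 : ℝ)| ≤ c₃ / Xnorm x k ∧
     |(x k 0 1 : ℝ) * ξ - (x k 1 1 : ℝ)| ≤ c₃ / Xnorm x k) ∧
    (x (k+2) = x (k+1) * Mmat (k+1) * x k ∧ x (k+2) = x k * Mmat k * x (k+1)) ∧
    (Xnorm x k < Xnorm x (k+1) ∧ Xnorm x k < (1 + ξ^2) * |(x k 0 0 : ℝ)|)

def polyNorm (P : Polynomial ℤ) : ℕ := P.support.sup fun i => (P.coeff i).natAbs

noncomputable def distInt (η : ℝ) : ℝ := |η - round η|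

noncomputable def ratHeight (α : ℚ) : ℝ := max |(α.num : ℝ)| (α.den : ℝ)

def IsMinIntPoly (α : ℂ) (P : Polynomial ℤ) : Prop :=
  P ≠ 0 ∧ Polynomial.aeval α P = 0 ∧ P.content = 1 ∧ 0 < P.leadingCoeff ∧
  ∀ Q : Polynomial ℤ, Q ≠ 0 → Polynomial.aeval α Q = 0 → P.degree ≤ Q.degree

noncomputable def Qpoly (x : ℕ → Matrix (Fin 2) (Fin 2) ℤ) (k : ℕ) : Polynomial ℤ :=
  Polynomial.C (x k 0 1 * x (k+1) 1 1 - x k 1 1 * x (k+1) 0 1)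
  - Polynomial.C (x k 0 0 * x (k+1) 1 1 - x k 1 1 * x (k+1) 0 0) * Polynomial.X
  + Polynomial.C (x k 0 0 * x (k+1) 0 1 - x k 0 1 * x (k+1) 0 0) * Polynomial.X ^ 2

/-!
Let `J` be a quarter turn. Since `A * J * A = det A • J` for symmetric `A`, the recurrence turns
into the bilinear relations `x k * J * x (k + 2) = J * Mmat k * x (k + 1)` and
`x (k + 1) * J * x (k + 2) = J * Mmat (k + 1) * x k`. A relation `U * J * A + V * J * B = 0` says
that the combinations `U i 0 • A + V i 0 • B` and `U i 1 • A + V i 1 • B`, seen as points of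
`ℤ³`, overlap to a point of `ℤ⁴`. With the first relation this produces, for each `k`, two integer
points of size `X_k ^ (1 + γ²)` that lie within `O(1 / X_{k+1})` of multiples of `(1, ξ, ξ², ξ³)`.
Both are orthogonal to the multiples of `Q_{k+1}`, and by the Markoff equation the 2 × 2 minor of
their first coordinates is `-(x k 0 0)²`; so a cubic that `Q_{k+1}` does not divide pairs to a
nonzero integer with one of them, which bounds its value at `ξ` from below. Quadratic polynomials
are treated with the points `x k` themselves, giving the exponent `γ³`. A cubic divisible by some
`Q_{k+1}` is a product of two integer polynomials of degree at most 2, and heights are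
multiplicative up to a constant.
-/

section GoldenRatio

theorem gold_pos : 0 < gold := Real.goldenRatio_pos

theorem one_lt_gold : 1 < gold := Real.one_lt_goldenRatio

theorem gold_sq : gold ^ 2 = gold + 1 := Real.goldenRatio_sq

theorem mul_le_of_rpow_gold_le {X Y Z c : ℝ} (hX : 0 < X) (hY : 0 < Y) (hc : 0 < c)
    (hXY : c * X ^ gold ≤ Y) (hYZ : c * Y ^ gold ≤ Z) :
    X * Y ≤ (1 / c) ^ (gold - 1) / c * Z := by
  have hg : 0 ≤ gold - 1 := by linarith [one_lt_gold]
  have hXle : X ≤ (1 / c) ^ (gold - 1) * Y ^ (gold - 1) := by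
    rw [← Real.mul_rpow (by positivity) hY.le]
    calc X = (X ^ gold) ^ (gold - 1) := by
          rw [← Real.rpow_mul hX.le, show gold * (gold - 1) = 1 by linear_combination gold_sq,
            Real.rpow_one]
      _ ≤ (1 / c * Y) ^ (gold - 1) := by
          gcongr
          rw [one_div, ← div_eq_inv_mul, le_div_iff₀ hc]
          linarith
  calc X * Y ≤ (1 / c) ^ (gold - 1) * Y ^ (gold - 1) * Y := by gcongr
    _ = (1 / c) ^ (gold - 1) / c * (c * Y ^ gold) := by
        rw [Real.rpow_sub_one hY.ne' gold]
        field_simp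
    _ ≤ (1 / c) ^ (gold - 1) / c * Z := by gcongr

end GoldenRatio

section SupNorm

theorem supNorm_eq_polyNorm (P : ℤ[X]) : P.supNorm = polyNorm P := by
  apply le_antisymm
  · obtain ⟨i, hi⟩ := P.exists_eq_supNorm
    rw [hi, Int.norm_eq_abs, ← Int.cast_abs, ← Nat.cast_natAbs]
    by_cases hPi : i ∈ P.support
    · exact_mod_cast Finset.le_sup (f := fun i => (P.coeff i).natAbs) hPi
    · simp [notMem_support_iff.mp hPi]
  · rw [← Nat.le_floor_iff P.supNorm_nonneg]
    refine Finset.sup_le fun i _ => Nat.le_floor ?_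
    simpa [Int.norm_eq_abs, Nat.cast_natAbs] using P.le_supNorm i

theorem one_le_supNorm {P : ℤ[X]} (hP : P ≠ 0) : 1 ≤ P.supNorm := by
  refine le_trans ?_ (P.le_supNorm P.natDegree)
  rw [Int.norm_eq_abs]
  exact_mod_cast Int.one_le_abs (leadingCoeff_ne_zero.mpr hP)

variable {A : Type*} [NormedRing A] {v : A →+* ℂ}

theorem supNorm_le_two_pow_mul_mapMahlerMeasure (hv : Isometry v) (p : A[X]) :
    p.supNorm ≤ 2 ^ p.natDegree * p.mapMahlerMeasure v := by
  obtain ⟨i, hi⟩ := p.exists_eq_supNorm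
  rw [hi]
  refine (norm_coeff_le_choose_mul_mapMahlerMeasure v hv i p).trans ?_
  have := p.mapMahlerMeasure_nonneg v
  gcongr
  exact_mod_cast Nat.choose_le_two_pow p.natDegree i

theorem mapMahlerMeasure_le_natDegree_add_one_mul_supNorm (hv : Isometry v) (p : A[X]) :
    p.mapMahlerMeasure v ≤ (p.natDegree + 1) * p.supNorm := by
  refine (p.mapMahlerMeasure_le_sum_norm_coeff v hv).trans ?_
  rw [sum_over_range _ fun _ => norm_zero]
  simpa using Finset.sum_le_card_nsmul (Finset.range (p.natDegree + 1)) _ p.supNorm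
    fun i _ => p.le_supNorm i

theorem supNorm_mul_supNorm_le (hv : Isometry v) (p q : A[X]) :
    p.supNorm * q.supNorm ≤
      2 ^ (p.natDegree + q.natDegree) * (p.natDegree + q.natDegree + 1) * (p * q).supNorm := by
  have hp := p.mapMahlerMeasure_nonneg v
  have hq := q.supNorm_nonneg
  have hpq := (p * q).supNorm_nonneg
  have hdeg : ((p * q).natDegree : ℝ) ≤ p.natDegree + q.natDegree := by
    exact_mod_cast natDegree_mul_le
  calc p.supNorm * q.supNorm
      ≤ 2 ^ p.natDegree * p.mapMahlerMeasure v * (2 ^ q.natDegree * q.mapMahlerMeasure v) := by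
        gcongr <;> exact supNorm_le_two_pow_mul_mapMahlerMeasure hv _
    _ = 2 ^ (p.natDegree + q.natDegree) * (p * q).mapMahlerMeasure v := by
        rw [mapMahlerMeasure_mul, pow_add, mul_mul_mul_comm]
    _ ≤ 2 ^ (p.natDegree + q.natDegree) * (((p * q).natDegree + 1) * (p * q).supNorm) := by
        gcongr
        exact mapMahlerMeasure_le_natDegree_add_one_mul_supNorm hv _
    _ ≤ 2 ^ (p.natDegree + q.natDegree) * (p.natDegree + q.natDegree + 1) * (p * q).supNorm := by
        rw [mul_assoc]
        gcongr

end SupNorm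

/-- The nonzero polynomials `P ∈ S` satisfy `|P(ξ)| ≫ ‖P‖^(-w)`, with an implied constant that
depends only on `ξ` and `S`. -/
def HasLowerBound (ξ : ℝ) (S : Set ℤ[X]) (w : ℝ) : Prop :=
  ∃ c > 0, ∀ P ∈ S, P ≠ 0 → c * P.supNorm ^ (-w) ≤ |aeval ξ P|

namespace HasLowerBound

variable {ξ w w' : ℝ} {S T : Set ℤ[X]}

theorem mono (h : HasLowerBound ξ T w) (hST : ∀ P ∈ S, P ≠ 0 → P ∈ T) :
    HasLowerBound ξ S w :=
  let ⟨c, hc, hT⟩ := h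
  ⟨c, hc, fun P hP hP₀ => hT P (hST P hP hP₀) hP₀⟩

theorem mono_exponent (h : HasLowerBound ξ S w) (hw : w ≤ w') : HasLowerBound ξ S w' := by
  obtain ⟨c, hc, hS⟩ := h
  refine ⟨c, hc, fun P hP hP₀ => le_trans ?_ (hS P hP hP₀)⟩
  gcongr
  exact one_le_supNorm hP₀

theorem union (hS : HasLowerBound ξ S w) (hT : HasLowerBound ξ T w) :
    HasLowerBound ξ (S ∪ T) w := by
  obtain ⟨c, hc, hS⟩ := hS
  obtain ⟨c', hc', hT⟩ := hT
  refine ⟨min c c', lt_min hc hc', fun P hP hP₀ => ?_⟩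
  have hpow : 0 ≤ P.supNorm ^ (-w) := Real.rpow_nonneg P.supNorm_nonneg _
  rcases hP with hP | hP
  · exact (mul_le_mul_of_nonneg_right (min_le_left _ _) hpow).trans (hS P hP hP₀)
  · exact (mul_le_mul_of_nonneg_right (min_le_right _ _) hpow).trans (hT P hP hP₀)

open scoped Pointwise in
theorem mul {m n : ℕ} (hw : 0 ≤ w) (hS : HasLowerBound ξ S w) (hT : HasLowerBound ξ T w)
    (hSm : ∀ P ∈ S, P.natDegree ≤ m) (hTn : ∀ Q ∈ T, Q.natDegree ≤ n) :
    HasLowerBound ξ (S * T) w := by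
  obtain ⟨c, hc, hS⟩ := hS
  obtain ⟨c', hc', hT⟩ := hT
  refine ⟨c * c' * (2 ^ (m + n) * (m + n + 1)) ^ (-w), by positivity, ?_⟩
  rintro _ ⟨P, hP, Q, hQ, rfl⟩ hPQ
  obtain ⟨hP₀, hQ₀⟩ := mul_ne_zero_iff.mp hPQ
  have hnorm : P.supNorm * Q.supNorm ≤ 2 ^ (m + n) * (m + n + 1) * (P * Q).supNorm := by
    have hcast : Isometry (Int.castRingHom ℂ) :=
      AddMonoidHomClass.isometry_of_norm _ fun a => by simp [Int.norm_eq_abs]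
    refine (supNorm_mul_supNorm_le hcast P Q).trans ?_
    have := (P * Q).supNorm_nonneg
    gcongr
    · norm_num
    all_goals first | exact hSm P hP | exact hTn Q hQ
  have hpos : 0 < P.supNorm * Q.supNorm :=
    mul_pos (one_pos.trans_le (one_le_supNorm hP₀)) (one_pos.trans_le (one_le_supNorm hQ₀))
  calc c * c' * (2 ^ (m + n) * (m + n + 1)) ^ (-w) * (P * Q).supNorm ^ (-w)
      = c * c' * (2 ^ (m + n) * (m + n + 1) * (P * Q).supNorm) ^ (-w) := by
        rw [Real.mul_rpow (by positivity) (P * Q).supNorm_nonneg, mul_assoc]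
    _ ≤ c * c' * (P.supNorm * Q.supNorm) ^ (-w) :=
        mul_le_mul_of_nonneg_left (Real.rpow_le_rpow_of_nonpos hpos hnorm (neg_nonpos.mpr hw))
          (by positivity)
    _ = c * P.supNorm ^ (-w) * (c' * Q.supNorm ^ (-w)) := by
        rw [Real.mul_rpow P.supNorm_nonneg Q.supNorm_nonneg, mul_mul_mul_comm]
    _ ≤ |aeval ξ P| * |aeval ξ Q| :=
        mul_le_mul (hS P hP hP₀) (hT Q hQ hQ₀)
          (mul_nonneg hc'.le (Real.rpow_nonneg Q.supNorm_nonneg _)) (abs_nonneg _)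
    _ = |aeval ξ (P * Q)| := by rw [map_mul, abs_mul]

end HasLowerBound

section CoeffPairing

/-- The linear form `P ↦ ∑ i, y i * p_i` on polynomials `P = ∑ i, p_i T^i` that a point `y` defines.
Coefficients of degree at least `n` are ignored, so it is only meaningful in degrees below `n`. -/
noncomputable def coeffPairing {A : Type*} [CommRing A] {n : ℕ} (y : Fin n → A) : A[X] →ₗ[A] A :=
  ∑ i, y i • lcoeff A i

theorem coeffPairing_apply {A : Type*} [CommRing A] {n : ℕ} (y : Fin n → A) (P : A[X]) :
    coeffPairing y P = ∑ i, y i * P.coeff i := by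
  simp [coeffPairing]

theorem coeffPairing_X_pow {A : Type*} [CommRing A] {n : ℕ} (y : Fin n → A) (j : Fin n) :
    coeffPairing y (X ^ (j : ℕ)) = y j := by
  simp [coeffPairing_apply, coeff_X_pow, Fin.val_inj]

theorem coeffPairing_map {A B : Type*} [CommRing A] [CommRing B] (f : A →+* B) {n : ℕ}
    (y : Fin n → A) (P : A[X]) : coeffPairing (f ∘ y) (P.map f) = f (coeffPairing y P) := by
  simp [coeffPairing_apply]

theorem abs_sub_mul_pow_le {ξ δ : ℝ} {n : ℕ} {y : Fin (n + 1) → ℝ}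
    (hδ : ∀ i : Fin n, |y i.castSucc * ξ - y i.succ| ≤ δ) (i : Fin (n + 1)) :
    |y i - y 0 * ξ ^ (i : ℕ)| ≤ (∑ j ∈ Finset.range i, |ξ| ^ j) * δ := by
  induction i using Fin.induction with
  | zero => simp
  | succ i ih =>
    rw [Fin.val_castSucc] at ih
    calc |y i.succ - y 0 * ξ ^ (i.succ : ℕ)|
        = |ξ * (y i.castSucc - y 0 * ξ ^ (i : ℕ)) - (y i.castSucc * ξ - y i.succ)| := by
          rw [Fin.val_succ]
          ring_nf
      _ ≤ |ξ| * |y i.castSucc - y 0 * ξ ^ (i : ℕ)| + |y i.castSucc * ξ - y i.succ| := by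
          rw [← abs_mul]
          exact abs_sub _ _
      _ ≤ |ξ| * ((∑ j ∈ Finset.range i, |ξ| ^ j) * δ) + δ := by
          gcongr
          exact hδ i
      _ = (∑ j ∈ Finset.range i.succ, |ξ| ^ j) * δ := by
          rw [Fin.val_succ, geom_sum_succ]
          ring

theorem abs_coeffPairing_le {ξ δ : ℝ} {n : ℕ} {y : Fin (n + 1) → ℤ} {P : ℤ[X]}
    (hP : P.natDegree ≤ n) (hδ : ∀ i : Fin n, |(y i.castSucc : ℝ) * ξ - y i.succ| ≤ δ) :
    |(coeffPairing y P : ℝ)| ≤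
      |(y 0 : ℝ)| * |aeval ξ P| + (n + 1) * (∑ j ∈ Finset.range n, |ξ| ^ j) * (P.supNorm * δ) := by
  have hδ₀ : n ≠ 0 → 0 ≤ δ := fun hn =>
    (abs_nonneg _).trans (hδ ⟨0, Nat.pos_of_ne_zero hn⟩)
  have haeval : aeval ξ P = ∑ i : Fin (n + 1), (P.coeff i : ℝ) * ξ ^ (i : ℕ) := by
    rw [aeval_eq_sum_range' (Nat.lt_succ_of_le hP), Finset.sum_range]
    simp
  have hsplit : (coeffPairing y P : ℝ) =
      y 0 * aeval ξ P + ∑ i : Fin (n + 1), (P.coeff i : ℝ) * ((y i : ℝ) - y 0 * ξ ^ (i : ℕ)) := by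
    rw [coeffPairing_apply, haeval, Finset.mul_sum, ← Finset.sum_add_distrib]
    push_cast
    exact Finset.sum_congr rfl fun i _ => by ring
  have hterm : ∀ i : Fin (n + 1), |(P.coeff i : ℝ) * ((y i : ℝ) - y 0 * ξ ^ (i : ℕ))| ≤
      (∑ j ∈ Finset.range n, |ξ| ^ j) * (P.supNorm * δ) := by
    intro i
    calc |(P.coeff i : ℝ) * ((y i : ℝ) - y 0 * ξ ^ (i : ℕ))|
        ≤ P.supNorm * ((∑ j ∈ Finset.range i, |ξ| ^ j) * δ) := by
          rw [abs_mul]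
          exact mul_le_mul (P.le_supNorm i)
            (abs_sub_mul_pow_le (y := fun i => (y i : ℝ)) hδ i) (abs_nonneg _) P.supNorm_nonneg
      _ ≤ P.supNorm * ((∑ j ∈ Finset.range n, |ξ| ^ j) * δ) := by
          rcases eq_or_ne n 0 with rfl | hn
          · simp [Fin.fin_one_eq_zero i]
          · have := hδ₀ hn
            have := P.supNorm_nonneg
            gcongr
            exact i.is_le
      _ = (∑ j ∈ Finset.range n, |ξ| ^ j) * (P.supNorm * δ) := by ring
  rw [hsplit]
  refine (abs_add_le _ _).trans (add_le_add (abs_mul _ _).le ?_)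
  refine (Finset.abs_sum_le_sum_abs _ _).trans
    ((Finset.sum_le_card_nsmul _ _ _ fun i _ => hterm i).trans (le_of_eq ?_))
  simp [mul_assoc]

end CoeffPairing

section Criterion

theorem exists_le_succ_and_le {u : ℕ → ℝ} (hu : Tendsto u atTop atTop) (K : ℝ) :
    ∃ G > 0, ∀ N ≥ 1, ∃ k, K * N ≤ u (k + 1) ∧ u k ≤ G * N := by
  refine ⟨max 1 (max (u 0) K), by positivity, fun N hN => ?_⟩
  have : 0 ≤ N := zero_le_one.trans hN
  have hex : ∃ k, K * N ≤ u (k + 1) :=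
    ((tendsto_add_atTop_iff_nat 1).mpr hu |>.eventually_ge_atTop (K * N)).exists
  classical
  refine ⟨Nat.find hex, Nat.find_spec hex, ?_⟩
  rcases hk : Nat.find hex with _ | k
  · calc u 0 ≤ max 1 (max (u 0) K) := (le_max_left _ _).trans (le_max_right _ _)
      _ ≤ max 1 (max (u 0) K) * N := le_mul_of_one_le_right (by positivity) hN
  · calc u (k + 1) ≤ K * N := (not_le.mp (Nat.find_min hex (hk ▸ k.lt_succ_self))).le
      _ ≤ max 1 (max (u 0) K) * N := by
        gcongr
        exact (le_max_right _ _).trans (le_max_right _ _)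

/- If the scale `k` is the least one at which the error term drops below `1/2`, a nonzero integer
`coeffPairing y P` forces `1/2 ≤ |y 0| |P(ξ)|`. -/
theorem hasLowerBound_of_points {ξ w C E : ℝ} {n : ℕ} {S : Set ℤ[X]} {u : ℕ → ℝ} (hw : 0 ≤ w)
    (hE : 0 < E) (hSn : ∀ P ∈ S, P.natDegree ≤ n) (hu₀ : ∀ k, 0 < u k)
    (hu : Tendsto u atTop atTop)
    (hpoint : ∀ P ∈ S, P ≠ 0 → ∀ k, ∃ y : Fin (n + 1) → ℤ, coeffPairing y P ≠ 0 ∧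
      |(y 0 : ℝ)| ≤ E * u k ^ w ∧
      ∀ i : Fin n, |(y i.castSucc : ℝ) * ξ - y i.succ| ≤ C / u (k + 1)) :
    HasLowerBound ξ S w := by
  set D := (n + 1) * (∑ j ∈ Finset.range n, |ξ| ^ j) * C with hD
  obtain ⟨G, hG, hscale⟩ := exists_le_succ_and_le hu (2 * D)
  refine ⟨1 / (2 * (E * G ^ w)), by positivity, fun P hP hP₀ => ?_⟩
  have hN := one_le_supNorm hP₀
  obtain ⟨k, hsucc, hle⟩ := hscale P.supNorm hN
  obtain ⟨y, hy, hy₀, hδ⟩ := hpoint P hP hP₀ k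
  have herror : (n + 1) * (∑ j ∈ Finset.range n, |ξ| ^ j) * (P.supNorm * (C / u (k + 1)))
      ≤ 1 / 2 := by
    calc _ = D * P.supNorm / u (k + 1) := by rw [hD]; ring
      _ ≤ 1 / 2 := by
        rw [div_le_iff₀ (hu₀ _)]
        linarith
  have hone : (1 : ℝ) ≤ |(coeffPairing y P : ℝ)| := by exact_mod_cast Int.one_le_abs hy
  have hhalf : 1 / 2 ≤ E * G ^ w * P.supNorm ^ w * |aeval ξ P| := by
    calc 1 / 2 ≤ |(y 0 : ℝ)| * |aeval ξ P| := by
          linarith [abs_coeffPairing_le (hSn P hP) hδ]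
      _ ≤ E * u k ^ w * |aeval ξ P| := by gcongr
      _ ≤ E * (G * P.supNorm) ^ w * |aeval ξ P| := by
          have := (hu₀ k).le
          gcongr
      _ = E * G ^ w * P.supNorm ^ w * |aeval ξ P| := by
          rw [Real.mul_rpow hG.le P.supNorm_nonneg, ← mul_assoc E]
  have : 0 < P.supNorm ^ w := Real.rpow_pos_of_pos (one_pos.trans_le hN) w
  rw [Real.rpow_neg P.supNorm_nonneg, ← div_eq_mul_inv, div_div, div_le_iff₀ (by positivity)]
  linarith

end Criterion

section Divisibility

theorem natDegree_div_add_natDegree_le {K : Type*} [Field K] {Q R : K[X]} (h : R / Q ≠ 0) :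
    (R / Q).natDegree + Q.natDegree ≤ R.natDegree := by
  have hQ : Q ≠ 0 := by
    rintro rfl
    exact h (EuclideanDomain.div_zero R)
  have hdeg : Q.degree ≤ R.degree := not_lt.mp (mt (Polynomial.div_eq_zero_iff hQ).mpr h)
  have hmul : (Q * (R / Q)).degree = R.degree := by rw [degree_mul, degree_add_div hQ hdeg]
  rw [← natDegree_eq_of_degree_eq hmul, natDegree_mul hQ h, add_comm]

theorem dvd_of_forall_linearMap_eq_zero {K : Type*} [Field K] {m n : ℕ} {Q R : K[X]} (hQ₀ : Q ≠ 0)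
    (hQ : Q.natDegree = m) (hR : R.natDegree < m + n) (φ : Fin m → K[X] →ₗ[K] K)
    (hφQ : ∀ i, ∀ j < n, φ i (Q * X ^ j) = 0)
    (hdet : (Matrix.of fun i j : Fin m => φ i (X ^ (j : ℕ))).det ≠ 0) (hφR : ∀ i, φ i R = 0) :
    Q ∣ R := by
  have hquot : ∀ i, φ i (Q * (R / Q)) = 0 := by
    intro i
    rcases eq_or_ne (R / Q) 0 with h | h
    · rw [h, mul_zero, map_zero]
    have hlt : (R / Q).natDegree < n := by
      have := natDegree_div_add_natDegree_le h
      omega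
    rw [(R / Q).as_sum_range' n hlt, Finset.mul_sum, map_sum]
    refine Finset.sum_eq_zero fun j hj => ?_
    rw [← C_mul_X_pow_eq_monomial, mul_left_comm, ← smul_eq_C_mul, map_smul,
      hφQ i j (Finset.mem_range.mp hj), smul_zero]
  have hrem : R % Q = ∑ j : Fin m, (R % Q).coeff j • X ^ (j : ℕ) := by
    have hdeg : (R % Q).degree < m :=
      (degree_mod_lt R hQ₀).trans_le (degree_le_of_natDegree_le hQ.le)
    simp_rw [smul_eq_C_mul]
    rw [sum_fin (fun j a => C a * X ^ j) (by simp) hdeg, sum_C_mul_X_pow_eq]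
  have hmulVec : (Matrix.of fun i j : Fin m => φ i (X ^ (j : ℕ))).mulVec
      (fun j => (R % Q).coeff j) = 0 := by
    ext i
    have h := hφR i
    rw [← EuclideanDomain.div_add_mod R Q, map_add, hquot, zero_add, hrem, map_sum] at h
    simpa [Matrix.mulVec, dotProduct, mul_comm] using h
  have hcoeff := congrFun (Matrix.eq_zero_of_mulVec_eq_zero hdet hmulVec)
  rw [← EuclideanDomain.mod_eq_zero, hrem]
  exact Finset.sum_eq_zero fun j _ => by rw [hcoeff j, Pi.zero_apply, zero_smul]

theorem primPart_dvd_iff_map_dvd_map {A : Type*} (K : Type*) [CommRing A] [IsDomain A]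
    [NormalizedGCDMonoid A] [Field K] [Algebra A K] [IsFractionRing A K] {Q R : A[X]} (hQ : Q ≠ 0) :
    Q.primPart ∣ R ↔ Q.map (algebraMap A K) ∣ R.map (algebraMap A K) := by
  have hunit : IsUnit (C (algebraMap A K Q.content)) :=
    isUnit_C.mpr ((map_ne_zero_iff _ (IsFractionRing.injective A K)).mpr
      (content_eq_zero_iff.not.mpr hQ)).isUnit
  rw [Q.isPrimitive_primPart.dvd_iff_fraction_map_dvd_fraction_map K]
  conv_rhs => rw [Q.eq_C_content_mul_primPart, Polynomial.map_mul, map_C]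
  exact hunit.mul_left_dvd.symm

end Divisibility

section SymmetricMatrices

variable {R : Type*} [CommRing R]

variable (R) in
/-- The quarter turn `J`. For symmetric matrices `U`, `A` the product `U * J * A` collects the 2 × 2
minors formed from a row of `U` and a row of `A`. -/
def quarterTurn : Matrix (Fin 2) (Fin 2) R := !![0, 1; -1, 0]

theorem quarterTurn_mul_self : quarterTurn R * quarterTurn R = -1 := by
  simp [quarterTurn, Matrix.one_fin_two]

theorem mul_quarterTurn_mul_apply (A B : Matrix (Fin 2) (Fin 2) R) (i j : Fin 2) :
    (A * quarterTurn R * B) i j = A i 0 * B 1 j - A i 1 * B 0 j := by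
  simp only [quarterTurn, Matrix.mul_apply, Matrix.of_apply, Matrix.cons_val', Matrix.cons_val_zero,
    Matrix.cons_val_one, Matrix.cons_val_fin_one, Fin.sum_univ_two]
  ring

theorem mul_quarterTurn_mul_transpose (A : Matrix (Fin 2) (Fin 2) R) :
    A * quarterTurn R * A.transpose = A.det • quarterTurn R := by
  ext i j
  rw [mul_quarterTurn_mul_apply, Matrix.smul_apply, Matrix.det_fin_two, smul_eq_mul]
  fin_cases i <;> fin_cases j <;>
    simp only [quarterTurn, Matrix.transpose_apply, Matrix.of_apply, Matrix.cons_val',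
      Matrix.cons_val, Fin.zero_eta, Fin.mk_one] <;>
    ring

/-- The point `(A₀₀, A₀₁, A₁₁)` with which a symmetric 2 × 2 matrix is identified. -/
def symmPoint (A : Matrix (Fin 2) (Fin 2) R) : Fin 3 → R := ![A 0 0, A 0 1, A 1 1]

/-- The point of `R⁴` whose first three coordinates are those of `U i 0 • A + V i 0 • B`. It is used
when `U * J * A + V * J * B = 0`, and then its last three are those of `U i 1 • A + V i 1 • B`. -/
def gluedPoint (U V A B : Matrix (Fin 2) (Fin 2) R) (i : Fin 2) : Fin 4 → R :=
  Fin.snoc (U i 0 • symmPoint A + V i 0 • symmPoint B) (U i 1 * A 1 1 + V i 1 * B 1 1)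

variable {U V A B : Matrix (Fin 2) (Fin 2) R}

theorem gluedPoint_castSucc (i : Fin 2) (l : Fin 3) :
    gluedPoint U V A B i l.castSucc = U i 0 * symmPoint A l + V i 0 * symmPoint B l := by
  simp [gluedPoint]

theorem gluedPoint_succ (hA : A 1 0 = A 0 1) (hB : B 1 0 = B 0 1)
    (h : U * quarterTurn R * A + V * quarterTurn R * B = 0) (i : Fin 2) (l : Fin 3) :
    gluedPoint U V A B i l.succ = U i 1 * symmPoint A l + V i 1 * symmPoint B l := by
  have hminor : ∀ j, U i 0 * A 1 j - U i 1 * A 0 j + (V i 0 * B 1 j - V i 1 * B 0 j) = 0 := by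
    intro j
    simpa only [Matrix.add_apply, mul_quarterTurn_mul_apply, Matrix.zero_apply] using
      congrFun₂ h i j
  have h₀ := hminor 0
  have h₁ := hminor 1
  rw [hA, hB] at h₀
  fin_cases l
  · rw [show Fin.succ ⟨0, _⟩ = (1 : Fin 3).castSucc from rfl, gluedPoint_castSucc]
    simp only [symmPoint, Matrix.cons_val, Fin.zero_eta]
    linear_combination h₀
  · rw [show Fin.succ ⟨1, _⟩ = (2 : Fin 3).castSucc from rfl, gluedPoint_castSucc]
    simp only [symmPoint, Matrix.cons_val, Fin.mk_one]
    linear_combination h₁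
  · rw [show Fin.succ ⟨2, _⟩ = Fin.last 3 from rfl]
    simp [gluedPoint, symmPoint]

theorem coeffPairing_gluedPoint {P : R[X]} (hP : P.natDegree ≤ 2) (i : Fin 2) :
    coeffPairing (gluedPoint U V A B i) P =
      U i 0 * coeffPairing (symmPoint A) P + V i 0 * coeffPairing (symmPoint B) P := by
  simp only [coeffPairing_apply, Fin.sum_univ_castSucc (n := 3), gluedPoint_castSucc, Fin.val_last,
    Fin.val_castSucc, coeff_eq_zero_of_natDegree_lt (Nat.lt_succ_of_le hP), mul_zero, add_zero,
    add_mul, Finset.sum_add_distrib, Finset.mul_sum, mul_assoc]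

theorem coeffPairing_gluedPoint_mul_X (hA : A 1 0 = A 0 1) (hB : B 1 0 = B 0 1)
    (h : U * quarterTurn R * A + V * quarterTurn R * B = 0) (P : R[X]) (i : Fin 2) :
    coeffPairing (gluedPoint U V A B i) (P * X) =
      U i 1 * coeffPairing (symmPoint A) P + V i 1 * coeffPairing (symmPoint B) P := by
  simp only [coeffPairing_apply, Fin.sum_univ_succ (n := 3), gluedPoint_succ hA hB h, Fin.val_zero,
    Fin.val_succ, coeff_mul_X, coeff_mul_X_zero, mul_zero, zero_add, add_mul,
    Finset.sum_add_distrib, Finset.mul_sum, mul_assoc]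

theorem abs_gluedPoint_sub_le {U V A B : Matrix (Fin 2) (Fin 2) ℤ} {ξ u v α β : ℝ}
    (hA : A 1 0 = A 0 1) (hB : B 1 0 = B 0 1)
    (h : U * quarterTurn ℤ * A + V * quarterTurn ℤ * B = 0) {i : Fin 2}
    (hU : ∀ j, |(U i j : ℝ)| ≤ u) (hV : ∀ j, |(V i j : ℝ)| ≤ v)
    (hα : ∀ l : Fin 2, |((symmPoint A l.castSucc : ℤ) : ℝ) * ξ - (symmPoint A l.succ : ℤ)| ≤ α)
    (hβ : ∀ l : Fin 2, |((symmPoint B l.castSucc : ℤ) : ℝ) * ξ - (symmPoint B l.succ : ℤ)| ≤ β)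
    (l : Fin 3) :
    |((gluedPoint U V A B i l.castSucc : ℤ) : ℝ) * ξ - (gluedPoint U V A B i l.succ : ℤ)| ≤
      u * α + v * β := by
  have hcomb : ∀ (j : Fin 2) (m : Fin 2),
      |((U i j * symmPoint A m.castSucc + V i j * symmPoint B m.castSucc : ℤ) : ℝ) * ξ -
        (U i j * symmPoint A m.succ + V i j * symmPoint B m.succ : ℤ)| ≤ u * α + v * β := by
    intro j m
    calc _ = |(U i j : ℝ) * ((symmPoint A m.castSucc : ℤ) * ξ - (symmPoint A m.succ : ℤ)) +
          V i j * ((symmPoint B m.castSucc : ℤ) * ξ - (symmPoint B m.succ : ℤ))| := by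
          push_cast
          ring_nf
      _ ≤ u * α + v * β := by
          refine (abs_add_le _ _).trans (add_le_add ?_ ?_) <;> rw [abs_mul]
          · exact mul_le_mul (hU j) (hα m) (abs_nonneg _) ((abs_nonneg _).trans (hU j))
          · exact mul_le_mul (hV j) (hβ m) (abs_nonneg _) ((abs_nonneg _).trans (hV j))
  cases l using Fin.lastCases with
  | last =>
    rw [← Fin.succ_last, ← Fin.succ_castSucc, gluedPoint_succ hA hB h, gluedPoint_succ hA hB h]
    exact hcomb 1 (Fin.last 1)
  | cast m =>
    rw [Fin.succ_castSucc, gluedPoint_castSucc, gluedPoint_castSucc]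
    exact hcomb 0 m

end SymmetricMatrices

section Qpoly

variable {x : ℕ → Matrix (Fin 2) (Fin 2) ℤ} {k : ℕ}

theorem Qpoly_coeff_zero :
    (Qpoly x k).coeff 0 = x k 0 1 * x (k + 1) 1 1 - x k 1 1 * x (k + 1) 0 1 := by
  simp [Qpoly]

theorem Qpoly_coeff_one :
    (Qpoly x k).coeff 1 = -(x k 0 0 * x (k + 1) 1 1 - x k 1 1 * x (k + 1) 0 0) := by
  rw [Qpoly, coeff_add, coeff_sub, coeff_C_of_ne_zero one_ne_zero, coeff_C_mul_X, coeff_C_mul_X_pow]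
  simp

theorem Qpoly_coeff_two :
    (Qpoly x k).coeff 2 = x k 0 0 * x (k + 1) 0 1 - x k 0 1 * x (k + 1) 0 0 := by
  rw [Qpoly, coeff_add, coeff_sub, coeff_C_of_ne_zero two_ne_zero, coeff_C_mul_X, coeff_C_mul_X_pow]
  simp

theorem natDegree_Qpoly_le : (Qpoly x k).natDegree ≤ 2 := by
  unfold Qpoly
  compute_degree

theorem coeffPairing_Qpoly (y : Fin 3 → ℤ) :
    coeffPairing y (Qpoly x k) =
      (Matrix.of ![y, symmPoint (x k), symmPoint (x (k + 1))]).det := by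
  simp only [coeffPairing_apply, Fin.sum_univ_three, Matrix.det_fin_three, Fin.val_zero,
    Fin.val_one, Fin.val_two, Qpoly_coeff_zero, Qpoly_coeff_one, Qpoly_coeff_two, symmPoint,
    Matrix.of_apply, Matrix.cons_val]
  ring

theorem coeffPairing_symmPoint_Qpoly : coeffPairing (symmPoint (x k)) (Qpoly x k) = 0 := by
  rw [coeffPairing_Qpoly]
  exact Matrix.det_zero_of_row_eq (i := 0) (j := 1) (by decide) rfl

theorem coeffPairing_symmPoint_succ_Qpoly :
    coeffPairing (symmPoint (x (k + 1))) (Qpoly x k) = 0 := by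
  rw [coeffPairing_Qpoly]
  exact Matrix.det_zero_of_row_eq (i := 0) (j := 2) (by decide) rfl

end Qpoly

section Mmat

theorem quarterTurn_mul_Mmat_mul_quarterTurn (k : ℕ) :
    quarterTurn ℤ * Mmat k * quarterTurn ℤ = !![0, -(-1) ^ k; (-1) ^ k, -3] := by
  simp [quarterTurn, Mmat, pow_succ]

theorem abs_quarterTurn_mul_Mmat_mul_quarterTurn_le (k : ℕ) (i j : Fin 2) :
    |((quarterTurn ℤ * Mmat k * quarterTurn ℤ) i j : ℝ)| ≤ 3 := by
  rw [quarterTurn_mul_Mmat_mul_quarterTurn]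
  fin_cases i <;> fin_cases j <;> norm_num

end Mmat

namespace MarkoffSeq

variable {ξ : ℝ} {x : ℕ → Matrix (Fin 2) (Fin 2) ℤ} {k : ℕ}

section Algebra

theorem apply_one_zero (hx : MarkoffSeq ξ x) (hk : 1 ≤ k) : x k 1 0 = x k 0 1 :=
  (hx.1 k hk).symm

theorem mul_quarterTurn_mul_self (hx : MarkoffSeq ξ x) (hk : 1 ≤ k) :
    x k * quarterTurn ℤ * x k = quarterTurn ℤ := by
  have hsymm : (x k).transpose = x k := by
    ext i j
    fin_cases i <;> fin_cases j <;> simp [hx.apply_one_zero hk]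
  simpa [hsymm, hx.2.1 k hk] using mul_quarterTurn_mul_transpose (x k)

theorem add_two_eq (hx : MarkoffSeq ξ x) (hk : 1 ≤ k) :
    x (k + 2) = x (k + 1) * Mmat (k + 1) * x k ∧ x (k + 2) = x k * Mmat k * x (k + 1) := by
  obtain ⟨-, -, c₁, c₂, c₃, -, -, -, h⟩ := hx
  exact (h k hk).2.2.1

theorem mul_quarterTurn_mul_add_two (hx : MarkoffSeq ξ x) (hk : 1 ≤ k) :
    x k * quarterTurn ℤ * x (k + 2) = quarterTurn ℤ * Mmat k * x (k + 1) := by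
  rw [(hx.add_two_eq hk).2, ← mul_assoc, ← mul_assoc, hx.mul_quarterTurn_mul_self hk]

theorem succ_mul_quarterTurn_mul_add_two (hx : MarkoffSeq ξ x) (hk : 1 ≤ k) :
    x (k + 1) * quarterTurn ℤ * x (k + 2) = quarterTurn ℤ * Mmat (k + 1) * x k := by
  rw [(hx.add_two_eq hk).1, ← mul_assoc, ← mul_assoc,
    hx.mul_quarterTurn_mul_self (k.succ_pos)]

theorem gluing_relation (hx : MarkoffSeq ξ x) (hk : 1 ≤ k) :
    x k * quarterTurn ℤ * x (k + 2) +
      quarterTurn ℤ * Mmat k * quarterTurn ℤ * quarterTurn ℤ * x (k + 1) = 0 := by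
  rw [hx.mul_quarterTurn_mul_add_two hk, mul_assoc (quarterTurn ℤ * Mmat k) (quarterTurn ℤ),
    quarterTurn_mul_self, mul_neg_one, neg_mul, add_neg_cancel]

theorem minors_succ_add_two (hx : MarkoffSeq ξ x) (hk : 1 ≤ k) (j : Fin 2) :
    x (k + 1) 0 0 * x (k + 2) 1 j - x (k + 1) 0 1 * x (k + 2) 0 j = (-1) ^ k * x k 0 j ∧
      x (k + 1) 1 0 * x (k + 2) 1 j - x (k + 1) 1 1 * x (k + 2) 0 j =
        -3 * x k 0 j + (-1) ^ k * x k 1 j := by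
  have h := fun i => congrFun₂ (hx.succ_mul_quarterTurn_mul_add_two hk) i j
  simp only [mul_quarterTurn_mul_apply] at h
  constructor <;> rw [h] <;>
    simp [quarterTurn, Mmat, Matrix.mul_apply, Fin.sum_univ_two, pow_succ]

theorem Qpoly_succ_coeff (hx : MarkoffSeq ξ x) (hk : 1 ≤ k) :
    (Qpoly x (k + 1)).coeff 0 = -3 * x k 0 1 + (-1) ^ k * x k 1 1 ∧
      (Qpoly x (k + 1)).coeff 1 = 3 * x k 0 0 - 2 * (-1) ^ k * x k 0 1 ∧
      (Qpoly x (k + 1)).coeff 2 = (-1) ^ k * x k 0 0 := by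
  have h₀ := hx.minors_succ_add_two hk 0
  have h₁ := hx.minors_succ_add_two hk 1
  rw [hx.apply_one_zero hk, hx.apply_one_zero (k := k + 1) (by omega),
    hx.apply_one_zero (k := k + 2) (by omega)] at h₀
  rw [hx.apply_one_zero (k := k + 1) (by omega)] at h₁
  rw [Qpoly_coeff_zero, Qpoly_coeff_one, Qpoly_coeff_two]
  exact ⟨h₁.2, by linear_combination -h₁.1 - h₀.2, h₀.1⟩

theorem apply_mul_apply_sub_sq_eq_one (hx : MarkoffSeq ξ x) (hk : 1 ≤ k) :
    x k 0 0 * x k 1 1 - x k 0 1 ^ 2 = 1 := by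
  rw [← hx.2.1 k hk, Matrix.det_fin_two, hx.apply_one_zero hk, sq]

theorem det_symmPoint (hx : MarkoffSeq ξ x) (hk : 1 ≤ k) :
    (Matrix.of ![symmPoint (x k), symmPoint (x (k + 1)), symmPoint (x (k + 2))]).det =
      2 * (-1) ^ k := by
  obtain ⟨h₀, h₁, h₂⟩ := hx.Qpoly_succ_coeff hk
  rw [← coeffPairing_Qpoly, coeffPairing_apply, Fin.sum_univ_three]
  simp only [symmPoint, Matrix.cons_val, Fin.val_zero, Fin.val_one, Fin.val_two, h₀, h₁, h₂]
  linear_combination 2 * (-1) ^ k * hx.apply_mul_apply_sub_sq_eq_one hk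

theorem exists_coeffPairing_symmPoint_ne_zero (hx : MarkoffSeq ξ x) (hk : 1 ≤ k) {P : ℤ[X]}
    (hP : P ≠ 0) (hdeg : P.natDegree ≤ 2) :
    ∃ i : Fin 3, coeffPairing (symmPoint (x (k + i))) P ≠ 0 := by
  by_contra! hzero
  have hmulVec : (Matrix.of ![symmPoint (x k), symmPoint (x (k + 1)), symmPoint (x (k + 2))]).mulVec
      (fun i => P.coeff i) = 0 := by
    ext i
    have h := hzero i
    rw [coeffPairing_apply] at h
    fin_cases i <;> exact h
  have hcoeff := congrFun (Matrix.eq_zero_of_mulVec_eq_zero (by simp [hx.det_symmPoint hk]) hmulVec)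
  refine hP (ext fun n => ?_)
  rcases lt_or_ge n 3 with hn | hn
  · exact hcoeff ⟨n, hn⟩
  · exact coeff_eq_zero_of_natDegree_lt (hdeg.trans_lt hn)

theorem markoff_equation (hx : MarkoffSeq ξ x) (hk : 1 ≤ k) :
    x k 0 0 ^ 2 + x (k + 1) 0 0 ^ 2 + x (k + 2) 0 0 ^ 2 =
      3 * x k 0 0 * x (k + 1) 0 0 * x (k + 2) 0 0 := by
  have hsign : ((-1 : ℤ) ^ k) ^ 2 = 1 := by rw [pow_right_comm, neg_one_sq, one_pow]
  have hrec : x (k + 2) 0 0 = 3 * x k 0 0 * x (k + 1) 0 0 +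
      (-1) ^ k * (x k 0 0 * x (k + 1) 0 1 - x k 0 1 * x (k + 1) 0 0) := by
    have h := congrFun₂ (hx.add_two_eq hk).2 0 0
    simp only [Mmat, Matrix.mul_apply, Fin.sum_univ_two, Matrix.of_apply, Matrix.cons_val',
      Matrix.cons_val_zero, Matrix.cons_val_one, Matrix.cons_val_fin_one,
      hx.apply_one_zero (k := k + 1) (by omega)] at h
    linear_combination h
  have hminor : x k 0 0 * x (k + 2) 0 1 - x k 0 1 * x (k + 2) 0 0 = -(-1) ^ k * x (k + 1) 0 0 := by
    have h := congrFun₂ (hx.mul_quarterTurn_mul_add_two hk) 0 0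
    rw [mul_quarterTurn_mul_apply, hx.apply_one_zero (k := k + 2) (by omega)] at h
    simpa [quarterTurn, Mmat, Matrix.mul_apply, Fin.sum_univ_two, pow_succ] using h
  have hminor_succ := (hx.minors_succ_add_two hk 0).1
  rw [hx.apply_one_zero (k := k + 2) (by omega)] at hminor_succ
  linear_combination x (k + 2) 0 0 * hrec - (-1) ^ k * x k 0 0 * hminor_succ +
    (-1) ^ k * x (k + 1) 0 0 * hminor - (x k 0 0 ^ 2 + x (k + 1) 0 0 ^ 2) * hsign

/-- The two points of `ℤ⁴` used to test cubic polynomials at level `k`. Their pairings with a cubic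
both vanish only if `Qpoly x (k + 1)` divides it. -/
def cubicPoint (x : ℕ → Matrix (Fin 2) (Fin 2) ℤ) (k : ℕ) : Fin 2 → Fin 4 → ℤ :=
  gluedPoint (x k) (quarterTurn ℤ * Mmat k * quarterTurn ℤ) (x (k + 2)) (x (k + 1))

theorem minor_cubicPoint (hx : MarkoffSeq ξ x) (hk : 1 ≤ k) :
    cubicPoint x k 0 0 * cubicPoint x k 1 1 - cubicPoint x k 0 1 * cubicPoint x k 1 0 =
      -x k 0 0 ^ 2 := by
  have hsign : ((-1 : ℤ) ^ k) ^ 2 = 1 := by rw [pow_right_comm, neg_one_sq, one_pow]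
  have h₀ : ∀ i, cubicPoint x k i 0 = _ := fun i => gluedPoint_castSucc i 0
  have h₁ : ∀ i, cubicPoint x k i 1 = _ := fun i => gluedPoint_succ
    (hx.apply_one_zero (by omega)) (hx.apply_one_zero (by omega)) (hx.gluing_relation hk) i 0
  simp only [h₀, h₁, quarterTurn_mul_Mmat_mul_quarterTurn, symmPoint, Matrix.of_apply,
    Matrix.cons_val, hx.apply_one_zero hk]
  linear_combination x (k + 2) 0 0 ^ 2 * hx.apply_mul_apply_sub_sq_eq_one hk +
    x (k + 1) 0 0 ^ 2 * hsign + hx.markoff_equation hk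

theorem coeffPairing_cubicPoint_Qpoly (hx : MarkoffSeq ξ x) (hk : 1 ≤ k) (i : Fin 2) {j : ℕ}
    (hj : j < 2) : coeffPairing (cubicPoint x k i) (Qpoly x (k + 1) * X ^ j) = 0 := by
  interval_cases j
  · rw [pow_zero, mul_one, cubicPoint, coeffPairing_gluedPoint natDegree_Qpoly_le,
      coeffPairing_symmPoint_Qpoly, coeffPairing_symmPoint_succ_Qpoly, mul_zero, mul_zero, add_zero]
  · rw [pow_one, cubicPoint, coeffPairing_gluedPoint_mul_X (hx.apply_one_zero (by omega))
      (hx.apply_one_zero (by omega)) (hx.gluing_relation hk), coeffPairing_symmPoint_Qpoly,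
      coeffPairing_symmPoint_succ_Qpoly, mul_zero, mul_zero, add_zero]

theorem apply_zero_zero_ne_zero (hx : MarkoffSeq ξ x) (hk : 1 ≤ k) : x k 0 0 ≠ 0 := by
  obtain ⟨-, -, c₁, c₂, c₃, -, -, -, h⟩ := hx
  intro ha
  have hlt := (h k hk).2.2.2.2
  rw [ha, Int.cast_zero, abs_zero, mul_zero] at hlt
  exact hlt.not_ge ((abs_nonneg _).trans (le_max_left _ _))

theorem natDegree_Qpoly_succ (hx : MarkoffSeq ξ x) (hk : 1 ≤ k) :
    (Qpoly x (k + 1)).natDegree = 2 := by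
  refine natDegree_eq_of_le_of_coeff_ne_zero natDegree_Qpoly_le ?_
  rw [(hx.Qpoly_succ_coeff hk).2.2]
  exact mul_ne_zero (pow_ne_zero k (by norm_num)) (hx.apply_zero_zero_ne_zero hk)

theorem map_Qpoly_succ_dvd (hx : MarkoffSeq ξ x) (hk : 1 ≤ k) {R : ℤ[X]} (hR : R.natDegree ≤ 3)
    (hzero : ∀ i, coeffPairing (cubicPoint x k i) R = 0) :
    (Qpoly x (k + 1)).map (Int.castRingHom ℚ) ∣ R.map (Int.castRingHom ℚ) := by
  have hinj : Function.Injective (Int.castRingHom ℚ) := Int.cast_injective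
  have hdeg : ((Qpoly x (k + 1)).map (Int.castRingHom ℚ)).natDegree = 2 := by
    rw [natDegree_map_eq_of_injective hinj, hx.natDegree_Qpoly_succ hk]
  refine dvd_of_forall_linearMap_eq_zero (n := 2) (ne_zero_of_natDegree_gt (hdeg ▸ two_pos)) hdeg
    (natDegree_map_le.trans_lt (by omega))
    (fun i => coeffPairing (Int.castRingHom ℚ ∘ cubicPoint x k i)) (fun i j hj => ?_) ?_
    fun i => by rw [coeffPairing_map, hzero, map_zero]
  · rw [← Polynomial.map_X (Int.castRingHom ℚ), ← Polynomial.map_pow, ← Polynomial.map_mul,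
      coeffPairing_map, hx.coeffPairing_cubicPoint_Qpoly hk i hj, map_zero]
  · have hpair : ∀ i j : Fin 2, coeffPairing (Int.castRingHom ℚ ∘ cubicPoint x k i)
        (X ^ (j : ℕ)) = cubicPoint x k i (Fin.castAdd 2 j) :=
      fun i j => coeffPairing_X_pow _ (Fin.castAdd 2 j)
    simp only [Matrix.det_fin_two, Matrix.of_apply, hpair]
    rw_mod_cast [show Fin.castAdd 2 (0 : Fin 2) = 0 from rfl,
      show Fin.castAdd 2 (1 : Fin 2) = 1 from rfl, hx.minor_cubicPoint hk]
    exact neg_ne_zero.mpr (pow_ne_zero 2 (hx.apply_zero_zero_ne_zero hk))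

end Algebra

section Growth

theorem abs_apply_le_Xnorm (hx : MarkoffSeq ξ x) (hk : 1 ≤ k) (i j : Fin 2) :
    |(x k i j : ℝ)| ≤ Xnorm x k := by
  have h := hx.apply_one_zero hk
  fin_cases i <;> fin_cases j <;> simp [Xnorm, h]

theorem one_le_Xnorm (hx : MarkoffSeq ξ x) (hk : 1 ≤ k) : 1 ≤ Xnorm x k := by
  refine le_trans ?_ (hx.abs_apply_le_Xnorm hk 0 0)
  exact_mod_cast Int.one_le_abs (hx.apply_zero_zero_ne_zero hk)

theorem Xnorm_pos (hx : MarkoffSeq ξ x) (hk : 1 ≤ k) : 0 < Xnorm x k :=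
  one_pos.trans_le (hx.one_le_Xnorm hk)

theorem strictMono_Xnorm_succ (hx : MarkoffSeq ξ x) : StrictMono fun k => Xnorm x (k + 1) := by
  obtain ⟨-, -, c₁, c₂, c₃, -, -, -, h⟩ := hx
  exact strictMono_nat_of_lt_succ fun k => (h (k + 1) k.succ_pos).2.2.2.1

theorem Xnorm_le_Xnorm (hx : MarkoffSeq ξ x) (hk : 1 ≤ k) {l : ℕ} (hkl : k ≤ l) :
    Xnorm x k ≤ Xnorm x l := by
  obtain ⟨k, rfl⟩ := Nat.exists_eq_add_of_le' hk
  obtain ⟨l, rfl⟩ := Nat.exists_eq_add_of_le' (hk.trans hkl)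
  exact hx.strictMono_Xnorm_succ.monotone (by omega)

theorem tendsto_Xnorm_succ (hx : MarkoffSeq ξ x) :
    Tendsto (fun k => Xnorm x (k + 1)) atTop atTop := by
  have hcast : ∀ k, Xnorm x k =
      (max (x k 0 0).natAbs (max (x k 0 1).natAbs (x k 1 1).natAbs) : ℕ) := by
    simp [Xnorm, Nat.cast_natAbs]
  have hmono := hx.strictMono_Xnorm_succ
  simp only [hcast] at hmono ⊢
  refine tendsto_natCast_atTop_atTop.comp (StrictMono.tendsto_atTop ?_)
  exact fun i j hij => Nat.cast_lt.mp (hmono hij)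

theorem exists_Xnorm_add_le (hx : MarkoffSeq ξ x) (n : ℕ) :
    ∃ E > 0, ∀ k ≥ 1, Xnorm x (k + n) ≤ E * Xnorm x k ^ (gold ^ n) := by
  have hpos := fun k (hk : 1 ≤ k) => hx.Xnorm_pos hk
  obtain ⟨-, -, c₁, c₂, c₃, -, hc₂, -, h⟩ := hx
  induction n with
  | zero => exact ⟨1, one_pos, fun k _ => by simp⟩
  | succ n ih =>
    obtain ⟨E, hE, ih⟩ := ih
    refine ⟨c₂ * E ^ gold, by positivity, fun k hk => ?_⟩
    have hk₀ := hpos k hk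
    have hkn₀ := hpos (k + n) (by omega)
    calc Xnorm x (k + (n + 1)) ≤ c₂ * Xnorm x (k + n) ^ gold := (h (k + n) (by omega)).1.2
      _ ≤ c₂ * (E * Xnorm x k ^ (gold ^ n)) ^ gold := by
        have := gold_pos.le
        gcongr
        exact ih k hk
      _ = c₂ * E ^ gold * Xnorm x k ^ (gold ^ (n + 1)) := by
        rw [Real.mul_rpow hE.le (by positivity), ← Real.rpow_mul hk₀.le, ← pow_succ, mul_assoc]

theorem exists_Xnorm_mul_le (hx : MarkoffSeq ξ x) :
    ∃ D > 0, ∀ k ≥ 1, Xnorm x k * Xnorm x (k + 1) ≤ D * Xnorm x (k + 2) := by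
  have hpos := fun k (hk : 1 ≤ k) => hx.Xnorm_pos hk
  obtain ⟨-, -, c₁, c₂, c₃, hc₁, -, -, h⟩ := hx
  exact ⟨_, by positivity, fun k hk => mul_le_of_rpow_gold_le (hpos k hk)
    (hpos (k + 1) k.succ_pos) hc₁ (h k hk).1.1 (h (k + 1) k.succ_pos).1.1⟩

theorem exists_abs_symmPoint_sub_le (hx : MarkoffSeq ξ x) :
    ∃ C > 0, ∀ k ≥ 1, ∀ l : Fin 2,
      |((symmPoint (x k) l.castSucc : ℤ) : ℝ) * ξ - (symmPoint (x k) l.succ : ℤ)| ≤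
        C / Xnorm x k := by
  obtain ⟨-, -, c₁, c₂, c₃, -, -, hc₃, h⟩ := hx
  refine ⟨c₃, hc₃, fun k hk l => ?_⟩
  have hk := (h k hk).2.1
  fin_cases l
  exacts [hk.1, hk.2]

theorem abs_cubicPoint_zero_le (hx : MarkoffSeq ξ x) (hk : 1 ≤ k) (i : Fin 2) :
    |(cubicPoint x k i 0 : ℝ)| ≤ 4 * (Xnorm x k * Xnorm x (k + 2)) := by
  have hk₁ := hx.one_le_Xnorm hk
  have hk₂ := hx.one_le_Xnorm (k := k + 2) (by omega)
  have hmono : Xnorm x (k + 1) ≤ Xnorm x (k + 2) := hx.Xnorm_le_Xnorm (by omega) (by omega)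
  rw [show cubicPoint x k i 0 = _ from gluedPoint_castSucc i 0]
  push_cast
  calc _ ≤ Xnorm x k * Xnorm x (k + 2) + 3 * Xnorm x (k + 1) := by
        refine (abs_add_le _ _).trans ?_
        rw [abs_mul, abs_mul]
        gcongr
        · exact hx.abs_apply_le_Xnorm hk i 0
        · exact hx.abs_apply_le_Xnorm (by omega) 0 0
        · exact abs_quarterTurn_mul_Mmat_mul_quarterTurn_le k i 0
        · exact hx.abs_apply_le_Xnorm (by omega) 0 0
    _ ≤ 4 * (Xnorm x k * Xnorm x (k + 2)) := by nlinarith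

theorem exists_abs_cubicPoint_sub_le (hx : MarkoffSeq ξ x) :
    ∃ C > 0, ∀ k ≥ 1, ∀ (i : Fin 2) (l : Fin 3),
      |(cubicPoint x k i l.castSucc : ℝ) * ξ - cubicPoint x k i l.succ| ≤ C / Xnorm x (k + 1) := by
  obtain ⟨C, hC, happrox⟩ := hx.exists_abs_symmPoint_sub_le
  obtain ⟨D, hD, hmul⟩ := hx.exists_Xnorm_mul_le
  refine ⟨(D + 3) * C, by positivity, fun k hk i l => ?_⟩
  have hk₁ := hx.Xnorm_pos (k := k + 1) (by omega)
  have hk₂ := hx.Xnorm_pos (k := k + 2) (by omega)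
  calc |(cubicPoint x k i l.castSucc : ℝ) * ξ - cubicPoint x k i l.succ|
      ≤ Xnorm x k * (C / Xnorm x (k + 2)) + 3 * (C / Xnorm x (k + 1)) :=
        abs_gluedPoint_sub_le (hx.apply_one_zero (by omega)) (hx.apply_one_zero (by omega))
          (hx.gluing_relation hk) (hx.abs_apply_le_Xnorm hk i)
          (abs_quarterTurn_mul_Mmat_mul_quarterTurn_le k i)
          (happrox (k + 2) (by omega)) (happrox (k + 1) (by omega)) l
    _ = C * (Xnorm x k * Xnorm x (k + 1) / Xnorm x (k + 2) + 3) / Xnorm x (k + 1) := by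
        field_simp
    _ ≤ C * (D + 3) / Xnorm x (k + 1) := by
        gcongr
        rw [div_le_iff₀ hk₂]
        exact hmul k hk
    _ = (D + 3) * C / Xnorm x (k + 1) := by rw [mul_comm C]

end Growth

theorem hasLowerBound_quadratic (hx : MarkoffSeq ξ x) :
    HasLowerBound ξ {P | P.natDegree ≤ 2} (gold ^ 3) := by
  obtain ⟨C, hC, happrox⟩ := hx.exists_abs_symmPoint_sub_le
  obtain ⟨E, hE, hgrowth⟩ := hx.exists_Xnorm_add_le 3
  have hpos := fun k => hx.Xnorm_pos (Nat.succ_pos k)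
  refine hasLowerBound_of_points (C := C) (pow_nonneg gold_pos.le 3) hE
    (fun P hP => hP) hpos hx.tendsto_Xnorm_succ fun P hdeg hP k => ?_
  obtain ⟨i, hi⟩ := hx.exists_coeffPairing_symmPoint_ne_zero (Nat.succ_pos (k + 1)) hP hdeg
  refine ⟨_, hi, ?_, fun l => ?_⟩
  · exact (hx.abs_apply_le_Xnorm (by omega) 0 0).trans
      ((hx.Xnorm_le_Xnorm (by omega) (by omega)).trans (hgrowth (k + 1) (by omega)))
  · refine (happrox _ (by omega) l).trans ?_
    gcongr
    · exact hpos _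
    · exact hx.Xnorm_le_Xnorm (by omega) (by omega)

theorem hasLowerBound_cubic_of_not_dvd (hx : MarkoffSeq ξ x) :
    HasLowerBound ξ {R | R.natDegree ≤ 3 ∧ ∀ k, 1 ≤ k →
      ¬(Qpoly x (k + 1)).map (Int.castRingHom ℚ) ∣ R.map (Int.castRingHom ℚ)}
      (1 + gold ^ 2) := by
  obtain ⟨C, -, happrox⟩ := hx.exists_abs_cubicPoint_sub_le
  obtain ⟨E, hE, hgrowth⟩ := hx.exists_Xnorm_add_le 2
  have hpos := fun k => hx.Xnorm_pos (Nat.succ_pos k)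
  refine hasLowerBound_of_points (C := C) (E := 4 * E) (u := fun k => Xnorm x (k + 1))
    (by positivity) (by positivity)
    (fun R hR => hR.1) hpos hx.tendsto_Xnorm_succ ?_
  rintro R ⟨hdeg, hndvd⟩ - k
  obtain ⟨i, hi⟩ : ∃ i, coeffPairing (cubicPoint x (k + 1) i) R ≠ 0 := by
    by_contra! hzero
    exact hndvd (k + 1) k.succ_pos (hx.map_Qpoly_succ_dvd k.succ_pos hdeg hzero)
  refine ⟨_, hi, ?_, happrox (k + 1) k.succ_pos i⟩
  calc |(cubicPoint x (k + 1) i 0 : ℝ)| ≤ 4 * (Xnorm x (k + 1) * Xnorm x (k + 1 + 2)) :=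
        hx.abs_cubicPoint_zero_le k.succ_pos i
    _ ≤ 4 * (Xnorm x (k + 1) * (E * Xnorm x (k + 1) ^ (gold ^ 2))) := by
        have := (hpos k).le
        gcongr
        exact hgrowth (k + 1) k.succ_pos
    _ = 4 * E * Xnorm x (k + 1) ^ (1 + gold ^ 2) := by
        rw [Real.rpow_add (hpos k), Real.rpow_one]
        ring

open scoped Pointwise in
theorem mem_mul_of_map_Qpoly_succ_dvd (hx : MarkoffSeq ξ x) (hk : 1 ≤ k) {R : ℤ[X]} (hR₀ : R ≠ 0)
    (hR : R.natDegree ≤ 3)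
    (hdvd : (Qpoly x (k + 1)).map (Int.castRingHom ℚ) ∣ R.map (Int.castRingHom ℚ)) :
    R ∈ {P : ℤ[X] | P.natDegree ≤ 2} * {U : ℤ[X] | U.natDegree ≤ 2} := by
  have hdeg : (Qpoly x (k + 1)).primPart.natDegree = 2 := by
    rw [natDegree_primPart, hx.natDegree_Qpoly_succ hk]
  have hQ₀ : Qpoly x (k + 1) ≠ 0 :=
    ne_zero_of_natDegree_gt (hx.natDegree_Qpoly_succ hk ▸ two_pos)
  obtain ⟨U, rfl⟩ := (primPart_dvd_iff_map_dvd_map ℚ hQ₀).mpr hdvd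
  rw [natDegree_mul (left_ne_zero_of_mul hR₀) (right_ne_zero_of_mul hR₀), hdeg] at hR
  exact Set.mul_mem_mul hdeg.le (show U.natDegree ≤ 2 by omega)

theorem hasLowerBound_cubic (hx : MarkoffSeq ξ x) :
    HasLowerBound ξ {R | R.natDegree ≤ 3} (gold ^ 3) := by
  have hexp : 1 + gold ^ 2 ≤ gold ^ 3 := by nlinarith [one_lt_gold, gold_sq]
  have hquad := hx.hasLowerBound_quadratic
  have hprod := hquad.mul (pow_nonneg gold_pos.le 3) hquad
    (fun P hP => hP) fun U hU => hU
  refine ((hx.hasLowerBound_cubic_of_not_dvd.mono_exponent hexp).union hprod).mono ?_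
  intro R hR hR₀
  by_cases hdvd : ∀ k, 1 ≤ k →
      ¬(Qpoly x (k + 1)).map (Int.castRingHom ℚ) ∣ R.map (Int.castRingHom ℚ)
  · exact Or.inl ⟨hR, hdvd⟩
  · push Not at hdvd
    obtain ⟨k, hk, hdvd⟩ := hdvd
    exact Or.inr (hx.mem_mul_of_map_Qpoly_succ_dvd hk hR₀ hR hdvd)

end MarkoffSeq

theorem stmt14 (ξ : ℝ) (x : ℕ → Matrix (Fin 2) (Fin 2) ℤ) (hx : MarkoffSeq ξ x) :
    ∃ c : ℝ, 0 < c ∧ ∀ R : Polynomial ℤ, R ≠ 0 → R.natDegree ≤ 3 →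
      |Polynomial.aeval ξ R| ≥ c * (polyNorm R : ℝ) ^ (-(gold^3)) ∧
      ((∀ k, 1 ≤ k →
          ¬ (Qpoly x k).map (Int.castRingHom ℚ) ∣ R.map (Int.castRingHom ℚ)) →
        |Polynomial.aeval ξ R| ≥ c * (polyNorm R : ℝ) ^ (-1 - gold^2)) := by
  obtain ⟨c, hc, hcubic⟩ := hx.hasLowerBound_cubic
  obtain ⟨c', hc', hnot_dvd⟩ := hx.hasLowerBound_cubic_of_not_dvd
  refine ⟨min c c', lt_min hc hc', fun R hR₀ hR => ?_⟩
  rw [← supNorm_eq_polyNorm]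
  have hpow : ∀ w : ℝ, 0 ≤ R.supNorm ^ w := Real.rpow_nonneg R.supNorm_nonneg
  refine ⟨(mul_le_mul_of_nonneg_right (min_le_left c c') (hpow _)).trans (hcubic R hR hR₀),
    fun hndvd => ?_⟩
  rw [← neg_add']
  exact (mul_le_mul_of_nonneg_right (min_le_right c c') (hpow _)).trans
    (hnot_dvd R ⟨hR, fun k _ => hndvd (k + 1) k.succ_pos⟩ hR₀)
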